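/- arXiv:1810.08486 — 10 statements merged into one kernel-verified Lean document; each statement's English description precedes it below -/
import Mathlib

section
/- Leibniz rule for the connection ∇⁰ (Proposition A.1, first part): for every module function f, every smooth algebra element Φ, and every W ∈ {X, Y, Z}, the identity ∇⁰_W(f·Φ) = (∇⁰_W f)·Φ + f·(δ_W Φ) holds as functions on ℝ × ℝ (all sums involved are pointwise finite since f is compactly supported in the first variable and Φ is finitely supported in the ℤ-variable). -/
noncomputable section

/-- `e(t) = exp(2πit)`. -/
def e2 (t : ℝ) : ℂ := Complex.exp (2 * Real.pi * Complex.I * t)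

/-- Partial derivative in the first variable. -/
def pdX (f : ℝ × ℝ → ℂ) (x y : ℝ) : ℂ := deriv (fun t => f (t, y)) x

/-- Partial derivative in the second variable. -/
def pdY (f : ℝ × ℝ → ℂ) (x y : ℝ) : ℂ := deriv (fun t => f (x, t)) y

/-- A module function: smooth, 1-periodic in the second variable, and supported in
`K × ℝ` for some compact `K ⊆ ℝ`. -/
def IsModuleFn (f : ℝ × ℝ → ℂ) : Prop :=
  ContDiff ℝ (⊤ : ℕ∞) f ∧ (∀ x y : ℝ, f (x, y + 1) = f (x, y)) ∧
    ∃ K : Set ℝ, IsCompact K ∧ ∀ x y : ℝ, x ∉ K → f (x, y) = 0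

/-- `(∇⁰_X f)(x,y) = −∂f/∂y(x,y) + (πci/(2μ))·x²·f(x,y)`. -/
def n0X (c : ℕ) (μ : ℝ) (f : ℝ × ℝ → ℂ) : ℝ × ℝ → ℂ := fun q =>
  -pdY f q.1 q.2 + (Real.pi : ℂ) * (c : ℂ) * Complex.I / (2 * (μ : ℂ)) * (q.1 : ℂ) ^ 2 * f q

/-- `(∇⁰_Y f)(x,y) = −∂f/∂x(x,y)`. -/
def n0Y (f : ℝ × ℝ → ℂ) : ℝ × ℝ → ℂ := fun q => -pdX f q.1 q.2

/-- `(∇⁰_Z f)(x,y) = (πix/μ)·f(x,y)`. -/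
def n0Z (μ : ℝ) (f : ℝ × ℝ → ℂ) : ℝ × ℝ → ℂ := fun q =>
  (Real.pi : ℂ) * Complex.I * (q.1 : ℂ) / (μ : ℂ) * f q

/-- A smooth algebra element of `D^c_{μν}`, presented as a `ℤ`-indexed family of smooth
functions on `ℝ × ℝ`: smooth, 1-periodic in `y`, finitely supported in the `ℤ`-variable,
and `ρ`-invariant. -/
def IsAlgElem (c : ℕ) (ν : ℝ) (Φ : ℤ → ℝ × ℝ → ℂ) : Prop :=
  (∀ p : ℤ, ContDiff ℝ (⊤ : ℕ∞) (Φ p)) ∧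
  (∀ (p : ℤ) (x y : ℝ), Φ p (x, y + 1) = Φ p (x, y)) ∧
  {p : ℤ | Φ p ≠ 0}.Finite ∧
  ∀ (p k : ℤ) (x y : ℝ),
    e2 (-((c : ℝ) * (k : ℝ) * (p : ℝ) * (y - (p : ℝ) * ν))) * Φ p (x + (k : ℝ), y) = Φ p (x, y)

/-- The right action of `Φ ∈ D^c_{μν}` on the module function `f`:
`(f·Φ)(x,y) = Σ_q f(x+2qμ, y+2qν)·conj(Φ(x+2qμ, y+2qν, q))`. -/
def rAct (μ ν : ℝ) (f : ℝ × ℝ → ℂ) (Φ : ℤ → ℝ × ℝ → ℂ) : ℝ × ℝ → ℂ := fun q =>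
  ∑ᶠ p : ℤ, f (q.1 + 2 * (p : ℝ) * μ, q.2 + 2 * (p : ℝ) * ν) *
    (starRingEnd ℂ) (Φ p (q.1 + 2 * (p : ℝ) * μ, q.2 + 2 * (p : ℝ) * ν))

/-- `(δ_X Φ)(x,y,p) = 2πicp(x−pμ)·Φ(x,y,p) − ∂Φ/∂y(x,y,p)`. -/
def dAlgX (c : ℕ) (μ : ℝ) (Φ : ℤ → ℝ × ℝ → ℂ) : ℤ → ℝ × ℝ → ℂ := fun p q =>
  2 * (Real.pi : ℂ) * Complex.I * (c : ℂ) * (p : ℂ) * ((q.1 : ℂ) - (p : ℂ) * (μ : ℂ)) * Φ p q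
    - pdY (Φ p) q.1 q.2

/-- `(δ_Y Φ)(x,y,p) = −∂Φ/∂x(x,y,p)`. -/
def dAlgY (Φ : ℤ → ℝ × ℝ → ℂ) : ℤ → ℝ × ℝ → ℂ := fun p q => -pdX (Φ p) q.1 q.2

/-- `(δ_Z Φ)(x,y,p) = 2πip·Φ(x,y,p)`. -/
def dAlgZ (Φ : ℤ → ℝ × ℝ → ℂ) : ℤ → ℝ × ℝ → ℂ := fun p q =>
  2 * (Real.pi : ℂ) * Complex.I * (p : ℂ) * Φ p q

/-- The `D^c_{μν}`-valued inner product
`⟨f,g⟩(x,y,p) = Σ_k e(−ckp(y−pν))·f(x+k,y)·conj(g(x−2pμ+k, y−2pν))`. -/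
def ipD (c : ℕ) (μ ν : ℝ) (f g : ℝ × ℝ → ℂ) : ℤ → ℝ × ℝ → ℂ := fun p q =>
  ∑ᶠ k : ℤ, e2 (-((c : ℝ) * (k : ℝ) * (p : ℝ) * (q.2 - (p : ℝ) * ν))) *
    f (q.1 + (k : ℝ), q.2) *
    (starRingEnd ℂ) (g (q.1 - 2 * (p : ℝ) * μ + (k : ℝ), q.2 - 2 * (p : ℝ) * ν))


theorem rAct_sum (μ ν : ℝ) (f : ℝ × ℝ → ℂ) (Φ : ℤ → ℝ × ℝ → ℂ) (S : Finset ℤ)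
    (h : ∀ p, p ∉ S → Φ p = 0) (x y : ℝ) :
    rAct μ ν f Φ (x, y) = ∑ p ∈ S, f (x + 2 * (p : ℝ) * μ, y + 2 * (p : ℝ) * ν) *
      (starRingEnd ℂ) (Φ p (x + 2 * (p : ℝ) * μ, y + 2 * (p : ℝ) * ν)) := by
  unfold rAct
  apply finsum_eq_sum_of_support_subset
  intro p hp
  by_contra hS
  apply hp
  have := h p (by simpa using hS)
  simp [this]

theorem hasDerivAt_pdX {f : ℝ × ℝ → ℂ} (hf : ContDiff ℝ (⊤ : ℕ∞) f) (x y : ℝ) :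
    HasDerivAt (fun t => f (t, y)) (pdX f x y) x := by
  have hd : Differentiable ℝ f := hf.differentiable (by simp)
  have : Differentiable ℝ (fun t : ℝ => f (t, y)) := by fun_prop
  exact (this x).hasDerivAt

theorem hasDerivAt_pdY {f : ℝ × ℝ → ℂ} (hf : ContDiff ℝ (⊤ : ℕ∞) f) (x y : ℝ) :
    HasDerivAt (fun t => f (x, t)) (pdY f x y) y := by
  have hd : Differentiable ℝ f := hf.differentiable (by simp)
  have : Differentiable ℝ (fun t : ℝ => f (x, t)) := by fun_prop
  exact (this y).hasDerivAt

theorem hasDerivAt_prod {g h : ℝ → ℂ} {g' h' : ℂ} {x a : ℝ} (hg : HasDerivAt g g' (x + a))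
    (hh : HasDerivAt h h' (x + a)) :
    HasDerivAt (fun t => g (t + a) * (starRingEnd ℂ) (h (t + a)))
      (g' * (starRingEnd ℂ) (h (x + a)) + g (x + a) * (starRingEnd ℂ) h') x := by
  have h1 := hg.comp_add_const x a
  have h2 := (hh.comp_add_const x a).star
  exact h1.mul h2

/-- Proposition A.1, Leibniz rule for `∇⁰`: for every module function `f`,
every smooth algebra element `Φ`, and every `W ∈ {X, Y, Z}`,
`∇⁰_W(f·Φ) = (∇⁰_W f)·Φ + f·(δ_W Φ)` as functions on `ℝ × ℝ`. -/
theorem statement0 (c : ℕ) (hc : 0 < c) (μ ν : ℝ) (hμ : μ ≠ 0)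
    (f : ℝ × ℝ → ℂ) (hf : IsModuleFn f)
    (Φ : ℤ → ℝ × ℝ → ℂ) (hΦ : IsAlgElem c ν Φ) :
    n0X c μ (rAct μ ν f Φ) = rAct μ ν (n0X c μ f) Φ + rAct μ ν f (dAlgX c μ Φ) ∧
    n0Y (rAct μ ν f Φ) = rAct μ ν (n0Y f) Φ + rAct μ ν f (dAlgY Φ) ∧
    n0Z μ (rAct μ ν f Φ) = rAct μ ν (n0Z μ f) Φ + rAct μ ν f (dAlgZ Φ) := by
  obtain ⟨hf1, -, -⟩ := hf
  obtain ⟨hs, -, hfin, -⟩ := hΦ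
  have hS : ∀ p, p ∉ hfin.toFinset → Φ p = 0 := by
    intro p hp
    simpa using hp
  generalize hfin.toFinset = S at hS
  have hμ' : (μ : ℂ) ≠ 0 := by exact_mod_cast hμ
  refine ⟨?_, ?_, ?_⟩
  · funext ⟨x, y⟩
    have hX : ∀ p, p ∉ S → dAlgX c μ Φ p = 0 := by
      intro p hp
      funext q
      simp [dAlgX, hS p hp, pdY]
    have hD := (HasDerivAt.fun_sum (u := S) (fun p _ => hasDerivAt_prod
        (hasDerivAt_pdY hf1 (x + 2 * (p : ℝ) * μ) (y + 2 * (p : ℝ) * ν))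
        (hasDerivAt_pdY (hs p) (x + 2 * (p : ℝ) * μ) (y + 2 * (p : ℝ) * ν)))
        : HasDerivAt (fun t => ∑ p ∈ S, _) (∑ p ∈ S, _) _).deriv
    simp only [← rAct_sum μ ν f Φ S hS] at hD
    change pdY (rAct μ ν f Φ) x y = _ at hD
    rw [Pi.add_apply, rAct_sum μ ν _ Φ S hS, rAct_sum μ ν _ _ S hX]
    simp only [n0X]
    rw [hD, rAct_sum μ ν _ Φ S hS, Finset.mul_sum, ← Finset.sum_neg_distrib,
      ← Finset.sum_add_distrib, ← Finset.sum_add_distrib]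
    refine Finset.sum_congr rfl fun p _ => ?_
    simp only [dAlgX, map_sub, map_mul, Complex.conj_ofReal, Complex.conj_I, map_natCast,
      map_intCast, map_ofNat]
    push_cast
    field_simp
    ring
  · funext ⟨x, y⟩
    have hX : ∀ p, p ∉ S → dAlgY Φ p = 0 := by
      intro p hp
      funext q
      simp [dAlgY, hS p hp, pdX]
    have hD := (HasDerivAt.fun_sum (u := S) (fun p _ => hasDerivAt_prod
        (hasDerivAt_pdX hf1 (x + 2 * (p : ℝ) * μ) (y + 2 * (p : ℝ) * ν))
        (hasDerivAt_pdX (hs p) (x + 2 * (p : ℝ) * μ) (y + 2 * (p : ℝ) * ν)))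
        : HasDerivAt (fun t => ∑ p ∈ S, _) (∑ p ∈ S, _) _).deriv
    simp only [← rAct_sum μ ν f Φ S hS] at hD
    change pdX (rAct μ ν f Φ) x y = _ at hD
    rw [Pi.add_apply, rAct_sum μ ν _ Φ S hS, rAct_sum μ ν _ _ S hX]
    simp only [n0Y]
    rw [hD, ← Finset.sum_neg_distrib, ← Finset.sum_add_distrib]
    refine Finset.sum_congr rfl fun p _ => ?_
    simp only [dAlgY, map_neg]
    ring
  · funext ⟨x, y⟩
    have hX : ∀ p, p ∉ S → dAlgZ Φ p = 0 := by
      intro p hp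
      funext q
      simp [dAlgZ, hS p hp]
    rw [Pi.add_apply, rAct_sum μ ν _ Φ S hS, rAct_sum μ ν _ _ S hX]
    simp only [n0Z]
    rw [rAct_sum μ ν _ Φ S hS, Finset.mul_sum, ← Finset.sum_add_distrib]
    refine Finset.sum_congr rfl fun p _ => ?_
    simp only [dAlgZ, map_mul, Complex.conj_ofReal, Complex.conj_I,
      map_intCast, map_ofNat]
    push_cast
    field_simp
    ring

end
end

section
/- Constant curvature of the connection ∇⁰ (Proposition A.2): for every module function f, (∇⁰_X ∇⁰_Y − ∇⁰_Y ∇⁰_X − c·∇⁰_Z) f = 0, (∇⁰_X ∇⁰_Z − ∇⁰_Z ∇⁰_X) f = 0, and (∇⁰_Y ∇⁰_Z − ∇⁰_Z ∇⁰_Y) f = −(πi/μ)·f. (These are the curvature operators Θ_{∇⁰}(X,Y), Θ_{∇⁰}(X,Z), Θ_{∇⁰}(Y,Z) for the Heisenberg Lie algebra basis with [X,Y] = cZ, [X,Z] = [Y,Z] = 0; as an element of E^c_{μν} the last one is (πi/μ)·Id_E.) -/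
noncomputable section

theorem pdX_fderiv (f : ℝ × ℝ → ℂ) (hf : Differentiable ℝ f) (x y : ℝ) :
    HasDerivAt (fun t => f (t, y)) (fderiv ℝ f (x, y) (1, 0)) x := by
  have h1 : HasDerivAt (fun t : ℝ => (t, y)) ((1 : ℝ), (0 : ℝ)) x :=
    (hasDerivAt_id x).prodMk (hasDerivAt_const x y)
  exact (hf (x, y)).hasFDerivAt.comp_hasDerivAt x h1

theorem pdY_fderiv (f : ℝ × ℝ → ℂ) (hf : Differentiable ℝ f) (x y : ℝ) :
    HasDerivAt (fun t => f (x, t)) (fderiv ℝ f (x, y) (0, 1)) y := by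
  have h1 : HasDerivAt (fun t : ℝ => (x, t)) ((0 : ℝ), (1 : ℝ)) y :=
    (hasDerivAt_const y x).prodMk (hasDerivAt_id y)
  exact (hf (x, y)).hasFDerivAt.comp_hasDerivAt y h1

/-- Proposition A.2, constant curvature of `∇⁰`: for every module function `f`,
`(∇⁰_X∇⁰_Y − ∇⁰_Y∇⁰_X − c·∇⁰_Z) f = 0`, `(∇⁰_X∇⁰_Z − ∇⁰_Z∇⁰_X) f = 0`, and
`(∇⁰_Y∇⁰_Z − ∇⁰_Z∇⁰_Y) f = −(πi/μ)·f`. -/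
theorem statement2 (c : ℕ) (hc : 0 < c) (μ ν : ℝ) (hμ : μ ≠ 0)
    (f : ℝ × ℝ → ℂ) (hf : IsModuleFn f) :
    (∀ q : ℝ × ℝ, n0X c μ (n0Y f) q - n0Y (n0X c μ f) q - (c : ℂ) * n0Z μ f q = 0) ∧
    (∀ q : ℝ × ℝ, n0X c μ (n0Z μ f) q - n0Z μ (n0X c μ f) q = 0) ∧
    (∀ q : ℝ × ℝ, n0Y (n0Z μ f) q - n0Z μ (n0Y f) q
      = -((Real.pi : ℂ) * Complex.I / (μ : ℂ)) * f q) := by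
  have hs := hf.1
  have hd : Differentiable ℝ f := hs.differentiable (by simp)
  have hs' : ContDiff ℝ 1 (fderiv ℝ f) := hs.fderiv_right (by norm_cast)
  have hd' : Differentiable ℝ (fderiv ℝ f) := hs'.differentiable (by simp)
  have ev : ∀ (v p : ℝ × ℝ), HasFDerivAt (fun q => fderiv ℝ f q v)
      ((fderiv ℝ (fderiv ℝ f) p).flip v) p := by
    intro v p
    have h := (hd' p).hasFDerivAt.clm_apply (hasFDerivAt_const v p)
    refine h.congr_fderiv ?_
    ext <;> simp
  have hdv : ∀ v : ℝ × ℝ, Differentiable ℝ (fun q => fderiv ℝ f q v) :=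
    fun v p => (ev v p).differentiableAt
  have hX : ∀ x y, pdX f x y = fderiv ℝ f (x, y) (1, 0) := fun x y => (pdX_fderiv f hd x y).deriv
  have hY : ∀ x y, pdY f x y = fderiv ℝ f (x, y) (0, 1) := fun x y => (pdY_fderiv f hd x y).deriv
  have sym : ∀ p v w, fderiv ℝ (fderiv ℝ f) p v w = fderiv ℝ (fderiv ℝ f) p w v := by
    intro p v w
    have h : IsSymmSndFDerivAt ℝ f p := by
      apply ContDiffAt.isSymmSndFDerivAt (n := 2) ((hs.of_le (by norm_cast)).contDiffAt)
      simp
    exact h v w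
  have hμ' : (μ : ℂ) ≠ 0 := by exact_mod_cast hμ
  have hof : ∀ x : ℝ, HasDerivAt (fun t : ℝ => (t : ℂ)) 1 x := fun x =>
    Complex.ofRealCLM.hasDerivAt (x := x)
  refine ⟨?_, ?_, ?_⟩
  · rintro ⟨x, y⟩
    have A : pdY (n0Y f) x y = -fderiv ℝ (fderiv ℝ f) (x, y) (0, 1) (1, 0) := by
      have h := (pdY_fderiv _ (hdv (1, 0)) x y).neg
      rw [(ev _ _).fderiv] at h
      have := h.deriv
      simp only [pdY, n0Y, hX]
      exact this
    have B : pdX (n0X c μ f) x y = -fderiv ℝ (fderiv ℝ f) (x, y) (1, 0) (0, 1)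
        + ((Real.pi : ℂ) * (c : ℂ) * Complex.I / (2 * (μ : ℂ)) * (2 * x) * f (x, y)
        + (Real.pi : ℂ) * (c : ℂ) * Complex.I / (2 * (μ : ℂ)) * (x : ℂ) ^ 2
          * fderiv ℝ f (x, y) (1, 0)) := by
      have h := (pdX_fderiv _ (hdv (0, 1)) x y).neg
      rw [(ev _ _).fderiv] at h
      have h2 := (((hof x).pow 2).const_mul
        ((Real.pi : ℂ) * (c : ℂ) * Complex.I / (2 * (μ : ℂ)))).mul (pdX_fderiv f hd x y)
      have := (h.add h2).deriv
      simp only [pdX, n0X, hY]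
      refine Eq.trans this ?_
      simp
    have e1 : n0X c μ (n0Y f) (x, y) = -pdY (n0Y f) x y +
      (Real.pi : ℂ) * (c : ℂ) * Complex.I / (2 * (μ : ℂ)) * (x : ℂ) ^ 2 * (-pdX f x y) := rfl
    have e2 : n0Y (n0X c μ f) (x, y) = -pdX (n0X c μ f) x y := rfl
    rw [e1, e2, A, B, hX, sym _ (0, 1) (1, 0)]
    simp only [n0Z]
    field_simp
    ring
  · rintro ⟨x, y⟩
    have A : pdY (n0Z μ f) x y = (Real.pi : ℂ) * Complex.I * (x : ℂ) / (μ : ℂ) * pdY f x y := by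
      rw [hY]
      exact ((pdY_fderiv f hd x y).const_mul
        ((Real.pi : ℂ) * Complex.I * (x : ℂ) / (μ : ℂ))).deriv
    have e1 : n0X c μ (n0Z μ f) (x, y) = -pdY (n0Z μ f) x y +
      (Real.pi : ℂ) * (c : ℂ) * Complex.I / (2 * (μ : ℂ)) * (x : ℂ) ^ 2 * n0Z μ f (x, y) := rfl
    rw [e1, A]
    simp only [n0Z, n0X]
    ring
  · rintro ⟨x, y⟩
    have A : pdX (n0Z μ f) x y = (Real.pi : ℂ) * Complex.I / (μ : ℂ) * f (x, y)
        + (Real.pi : ℂ) * Complex.I * (x : ℂ) / (μ : ℂ) * pdX f x y := by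
      rw [hX]
      have h := ((((hof x).const_mul ((Real.pi : ℂ) * Complex.I)).div_const (μ : ℂ)).mul
        (pdX_fderiv f hd x y)).deriv
      refine Eq.trans h ?_
      simp
    have e1 : n0Y (n0Z μ f) (x, y) = -pdX (n0Z μ f) x y := rfl
    rw [e1, A]
    simp only [n0Z, n0Y]
    ring

end
end

section
/- Leibniz rule for the connection ∇¹ (part of Theorem 3.4): assume ν ≠ 0. For every module function f and every smooth algebra element Φ, ∇¹_X(f·Φ) = (∇¹_X f)·Φ + f·(δ_X Φ) as functions on ℝ × ℝ. -/
noncomputable section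

/-- `(∇¹_X f)(x,y) = −∂f/∂y(x,y) + (πci/(2μ)·x² − νix + μiy)·f(x,y)`. -/
def n1X (c : ℕ) (μ ν : ℝ) (f : ℝ × ℝ → ℂ) : ℝ × ℝ → ℂ := fun q =>
  -pdY f q.1 q.2 +
    ((Real.pi : ℂ) * (c : ℂ) * Complex.I / (2 * (μ : ℂ)) * (q.1 : ℂ) ^ 2
      - (ν : ℂ) * Complex.I * (q.1 : ℂ) + (μ : ℂ) * Complex.I * (q.2 : ℂ)) * f q

/-- part of Theorem 3.4, Leibniz rule for `∇¹_X`: assuming `ν ≠ 0`, for every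
module function `f` and every smooth algebra element `Φ`,
`∇¹_X(f·Φ) = (∇¹_X f)·Φ + f·(δ_X Φ)` as functions on `ℝ × ℝ`.
(Here `∇¹_Y = ∇⁰_Y` and `∇¹_Z = ∇⁰_Z`.) -/
theorem statement3 (c : ℕ) (hc : 0 < c) (μ ν : ℝ) (hμ : μ ≠ 0) (hν : ν ≠ 0)
    (f : ℝ × ℝ → ℂ) (hf : IsModuleFn f)
    (Φ : ℤ → ℝ × ℝ → ℂ) (hΦ : IsAlgElem c ν Φ) :
    n1X c μ ν (rAct μ ν f Φ) = rAct μ ν (n1X c μ ν f) Φ + rAct μ ν f (dAlgX c μ Φ) := by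
  obtain ⟨hfs, -, -⟩ := hf
  obtain ⟨hΦs, -, hfin, -⟩ := hΦ
  have key : ∀ (g : ℝ × ℝ → ℂ) (Ψ : ℤ → ℝ × ℝ → ℂ), (∀ p, Φ p = 0 → Ψ p = 0) → ∀ q,
      rAct μ ν g Ψ q = ∑ p ∈ hfin.toFinset, g (q.1 + 2 * (p : ℝ) * μ, q.2 + 2 * (p : ℝ) * ν) *
    (starRingEnd ℂ) (Ψ p (q.1 + 2 * (p : ℝ) * μ, q.2 + 2 * (p : ℝ) * ν)) := by
    intro g Ψ h q
    unfold rAct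
    apply finsum_eq_sum_of_support_subset
    intro p hp
    simp only [Set.Finite.coe_toFinset, Set.mem_setOf_eq]
    intro h0
    apply hp
    simp [h p h0]
  have hd0 : ∀ p, Φ p = 0 → dAlgX c μ Φ p = 0 := by
    intro p hp
    funext q
    simp [dAlgX, pdY, hp]
  have hdf : ∀ (g : ℝ × ℝ → ℂ), ContDiff ℝ (⊤ : ℕ∞) g → ∀ x y s : ℝ,
      HasDerivAt (fun t => g (x, t + s)) (pdY g x (y + s)) y := by
    intro g hg x y s
    have h1 : Differentiable ℝ g := hg.differentiable (by simp)
    have h2 : DifferentiableAt ℝ (fun t => g (x, t)) (y + s) := by fun_prop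
    exact h2.hasDerivAt.comp_add_const y s
  funext q
  obtain ⟨x, y⟩ := q
  have hD : pdY (rAct μ ν f Φ) x y = ∑ p ∈ hfin.toFinset,
      (pdY f (x + 2 * (p : ℝ) * μ) (y + 2 * (p : ℝ) * ν) *
        (starRingEnd ℂ) (Φ p (x + 2 * (p : ℝ) * μ, y + 2 * (p : ℝ) * ν)) +
       f (x + 2 * (p : ℝ) * μ, y + 2 * (p : ℝ) * ν) *
        (starRingEnd ℂ) (pdY (Φ p) (x + 2 * (p : ℝ) * μ) (y + 2 * (p : ℝ) * ν))) := by
    unfold pdY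
    simp only [key f Φ (fun _ h => h)]
    apply HasDerivAt.deriv
    apply HasDerivAt.fun_sum
    intro p _
    exact (hdf f hfs _ y _).mul (hdf (Φ p) (hΦs p) _ y _).star
  rw [Pi.add_apply, key _ Φ (fun _ h => h), key f _ hd0]
  simp only [n1X]
  rw [hD, key f Φ (fun _ h => h), Finset.mul_sum, ← Finset.sum_neg_distrib,
    ← Finset.sum_add_distrib, ← Finset.sum_add_distrib]
  apply Finset.sum_congr rfl
  intro p _
  have hμ' : (μ : ℂ) ≠ 0 := by exact_mod_cast hμ
  simp only [dAlgX, map_sub, map_mul, Complex.conj_I, Complex.conj_ofReal, map_natCast,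
    map_intCast, map_ofNat]
  push_cast
  field_simp
  ring

end
end

section
/- Compatibility of the connection ∇¹ with the D-valued inner product (part of Theorem 3.4): assume ν ≠ 0. For all module functions f, g and every (x, y, p) ∈ ℝ × ℝ × ℤ, ⟨∇¹_X f, g⟩(x,y,p) + ⟨f, ∇¹_X g⟩(x,y,p) = 2πicp(x−pμ)·⟨f,g⟩(x,y,p) − ∂/∂y[⟨f,g⟩(x,y,p)]. -/
noncomputable section

theorem aux_fin (K : Set ℝ) (hK : IsCompact K) (x : ℝ) :
    {k : ℤ | x + (k : ℝ) ∈ K}.Finite := by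
  obtain ⟨R, hR⟩ := hK.isBounded.subset_closedBall 0
  refine (Set.finite_Icc ⌊-R - x⌋ ⌈R - x⌉).subset ?_
  intro k hk
  have h := hR hk
  rw [mem_closedBall_zero_iff, Real.norm_eq_abs, abs_le] at h
  constructor
  · have : (⌊-R - x⌋ : ℝ) ≤ k := (Int.floor_le _).trans (by linarith [h.1])
    exact_mod_cast this
  · have : (k : ℝ) ≤ ⌈R - x⌉ := le_trans (by linarith [h.2]) (Int.le_ceil _)
    exact_mod_cast this

theorem aux_ip (c : ℕ) (μ ν : ℝ) (f g : ℝ × ℝ → ℂ) (K : Set ℝ) (x : ℝ) (s : Finset ℤ)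
    (hs : ∀ k : ℤ, x + (k : ℝ) ∈ K → k ∈ s) (hf : ∀ x y : ℝ, x ∉ K → f (x, y) = 0)
    (y : ℝ) (p : ℤ) :
    ipD c μ ν f g p (x, y) =
      ∑ k ∈ s, e2 (-((c : ℝ) * (k : ℝ) * (p : ℝ) * (y - (p : ℝ) * ν))) *
        f (x + (k : ℝ), y) *
        (starRingEnd ℂ) (g (x - 2 * (p : ℝ) * μ + (k : ℝ), y - 2 * (p : ℝ) * ν)) := by
  unfold ipD
  apply finsum_eq_sum_of_support_subset
  intro k hk
  apply hs
  by_contra h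
  apply hk
  simp [hf _ y h]

theorem aux_hd (f : ℝ × ℝ → ℂ) (hf : ContDiff ℝ (⊤ : ℕ∞) f) (x y : ℝ) :
    HasDerivAt (fun t => f (x, t)) (pdY f x y) y := by
  have hd : Differentiable ℝ f := hf.differentiable (by simp)
  have : DifferentiableAt ℝ (fun t => f (x, t)) y := by fun_prop
  exact this.hasDerivAt

theorem aux_e2 (a b y : ℝ) :
    HasDerivAt (fun t : ℝ => e2 (-(a * (t - b))))
      (-(2 * Real.pi * Complex.I * a) * e2 (-(a * (y - b)))) y := by
  unfold e2
  have h1 : HasDerivAt (fun t : ℝ => -(a * (t - b))) (-(a * 1)) y :=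
    (((hasDerivAt_id y).sub_const b).const_mul a).neg
  have h2 := ((h1.ofReal_comp).const_mul (2 * Real.pi * Complex.I : ℂ)).cexp
  convert h2 using 1
  push_cast
  ring

/-- part of Theorem 3.4, compatibility of `∇¹_X` with `⟨·,·⟩_R^D`: assuming
`ν ≠ 0`, for all module functions `f, g` and every `(x, y, p)`,
`⟨∇¹_X f, g⟩(x,y,p) + ⟨f, ∇¹_X g⟩(x,y,p) = 2πicp(x−pμ)·⟨f,g⟩(x,y,p) − ∂/∂y[⟨f,g⟩(x,y,p)]`. -/
theorem statement4 (c : ℕ) (hc : 0 < c) (μ ν : ℝ) (hμ : μ ≠ 0) (hν : ν ≠ 0)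
    (f g : ℝ × ℝ → ℂ) (hf : IsModuleFn f) (hg : IsModuleFn g) :
    ∀ (x y : ℝ) (p : ℤ),
      ipD c μ ν (n1X c μ ν f) g p (x, y) + ipD c μ ν f (n1X c μ ν g) p (x, y) =
        2 * (Real.pi : ℂ) * Complex.I * (c : ℂ) * (p : ℂ) * ((x : ℂ) - (p : ℂ) * (μ : ℂ)) *
          ipD c μ ν f g p (x, y) - pdY (ipD c μ ν f g p) x y := by
  intro x y p
  obtain ⟨hfs, -, K, hK, hfK⟩ := hf
  obtain ⟨hgs, -, -⟩ := hg
  have hfin := aux_fin K hK x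
  have hs : ∀ k : ℤ, x + (k : ℝ) ∈ K → k ∈ hfin.toFinset := by
    intro k hk
    simpa using hk
  generalize hfin.toFinset = s at hs
  have hnK : ∀ x y : ℝ, x ∉ K → n1X c μ ν f (x, y) = 0 := by
    intro x y hx
    simp [n1X, pdY, hfK x _ hx]
  have hder : pdY (ipD c μ ν f g p) x y = ∑ k ∈ s,
      ((-(2 * Real.pi * Complex.I * ((c : ℝ) * (k : ℝ) * (p : ℝ) : ℝ)) *
          e2 (-((c : ℝ) * (k : ℝ) * (p : ℝ) * (y - (p : ℝ) * ν))) * f (x + (k : ℝ), y) +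
        e2 (-((c : ℝ) * (k : ℝ) * (p : ℝ) * (y - (p : ℝ) * ν))) * pdY f (x + (k : ℝ)) y) *
        (starRingEnd ℂ) (g (x - 2 * (p : ℝ) * μ + (k : ℝ), y - 2 * (p : ℝ) * ν)) +
      e2 (-((c : ℝ) * (k : ℝ) * (p : ℝ) * (y - (p : ℝ) * ν))) * f (x + (k : ℝ), y) *
        (starRingEnd ℂ) (pdY g (x - 2 * (p : ℝ) * μ + (k : ℝ)) (y - 2 * (p : ℝ) * ν))) := by
    unfold pdY
    simp_rw [aux_ip c μ ν f g K x s hs hfK]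
    refine HasDerivAt.deriv (HasDerivAt.fun_sum fun k _ => ?_)
    refine ((aux_e2 _ _ y).mul (aux_hd f hfs _ y)).mul ?_
    have h := aux_hd g hgs (x - 2 * (p : ℝ) * μ + (k : ℝ)) (y - 2 * (p : ℝ) * ν)
    exact (h.comp_sub_const y (2 * (p : ℝ) * ν)).star
  rw [hder, aux_ip c μ ν f g K x s hs hfK, aux_ip c μ ν f _ K x s hs hfK,
    aux_ip c μ ν _ g K x s hs hnK, Finset.mul_sum, ← Finset.sum_add_distrib,
    ← Finset.sum_sub_distrib]
  refine Finset.sum_congr rfl fun k _ => ?_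
  have hμ' : (μ : ℂ) ≠ 0 := by exact_mod_cast hμ
  simp only [n1X, map_add, map_sub, map_mul, map_neg, map_div₀, map_pow, Complex.conj_ofReal,
    Complex.conj_I, map_natCast, map_ofNat]
  push_cast
  field_simp
  ring

end
end

section
/- Constant curvature of the connection ∇¹ (part of Theorem 3.4): assume ν ≠ 0. For every module function f, (∇¹_X ∇¹_Y − ∇¹_Y ∇¹_X − c·∇¹_Z) f = −νi·f, (∇¹_X ∇¹_Z − ∇¹_Z ∇¹_X) f = 0, and (∇¹_Y ∇¹_Z − ∇¹_Z ∇¹_Y) f = −(πi/μ)·f. (As elements of E^c_{μν}, the curvature is Θ_{∇¹}(X,Y) = νi·Id_E, Θ_{∇¹}(X,Z) = 0, Θ_{∇¹}(Y,Z) = (πi/μ)·Id_E.) -/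
noncomputable section

theorem aux_hX (f : ℝ × ℝ → ℂ) (x y : ℝ) (h : DifferentiableAt ℝ f (x, y)) :
    HasDerivAt (fun t => f (t, y)) (fderiv ℝ f (x, y) (1, 0)) x :=
  HasFDerivAt.comp_hasDerivAt (f := fun t : ℝ => (t, y)) x h.hasFDerivAt
    ((hasDerivAt_id x).prodMk (hasDerivAt_const x y))

theorem aux_hY (f : ℝ × ℝ → ℂ) (x y : ℝ) (h : DifferentiableAt ℝ f (x, y)) :
    HasDerivAt (fun t => f (x, t)) (fderiv ℝ f (x, y) (0, 1)) y :=
  HasFDerivAt.comp_hasDerivAt (f := fun t : ℝ => (x, t)) y h.hasFDerivAt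
    ((hasDerivAt_const y x).prodMk (hasDerivAt_id y))

/-- part of Theorem 3.4, constant curvature of `∇¹`: assuming `ν ≠ 0`, for
every module function `f`, `(∇¹_X∇¹_Y − ∇¹_Y∇¹_X − c·∇¹_Z) f = −νi·f`,
`(∇¹_X∇¹_Z − ∇¹_Z∇¹_X) f = 0`, and `(∇¹_Y∇¹_Z − ∇¹_Z∇¹_Y) f = −(πi/μ)·f`.
(Here `∇¹_Y = ∇⁰_Y` and `∇¹_Z = ∇⁰_Z`.) -/
theorem statement5 (c : ℕ) (hc : 0 < c) (μ ν : ℝ) (hμ : μ ≠ 0) (hν : ν ≠ 0)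
    (f : ℝ × ℝ → ℂ) (hf : IsModuleFn f) :
    (∀ q : ℝ × ℝ, n1X c μ ν (n0Y f) q - n0Y (n1X c μ ν f) q - (c : ℂ) * n0Z μ f q
      = -(ν : ℂ) * Complex.I * f q) ∧
    (∀ q : ℝ × ℝ, n1X c μ ν (n0Z μ f) q - n0Z μ (n1X c μ ν f) q = 0) ∧
    (∀ q : ℝ × ℝ, n0Y (n0Z μ f) q - n0Z μ (n0Y f) q
      = -((Real.pi : ℂ) * Complex.I / (μ : ℂ)) * f q) := by
  obtain ⟨hs, -, -⟩ := hf
  have hμ' : (μ : ℂ) ≠ 0 := by exact_mod_cast hμ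
  have hd : Differentiable ℝ f := hs.differentiable (by simp)
  have h2 : ContDiff ℝ 2 f :=
    hs.of_le (WithTop.coe_le_coe.2 (le_top : (2 : ℕ∞) ≤ ⊤))
  have hd' : Differentiable ℝ (fderiv ℝ f) :=
    (h2.fderiv_right (m := 1) (by norm_num)).differentiable (by simp)
  have hfX : ∀ x y, pdX f x y = fderiv ℝ f (x, y) (1, 0) := fun x y =>
    (aux_hX f x y (hd _)).deriv
  have hfY : ∀ x y, pdY f x y = fderiv ℝ f (x, y) (0, 1) := fun x y =>
    (aux_hY f x y (hd _)).deriv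
  have hXd := fun x y => aux_hX f x y (hd _)
  have hYd := fun x y => aux_hY f x y (hd _)
  have hid : ∀ x : ℝ, HasDerivAt (fun t : ℝ => (t : ℂ)) 1 x := fun x =>
    (hasDerivAt_id x).ofReal_comp
  refine ⟨?_, ?_, ?_⟩
  · rintro ⟨x, y⟩
    have hsym : fderiv ℝ (fderiv ℝ f) (x, y) (1, 0) (0, 1)
        = fderiv ℝ (fderiv ℝ f) (x, y) (0, 1) (1, 0) :=
      (h2.contDiffAt.isSymmSndFDerivAt (by
        simp)) _ _
    have a1 : HasDerivAt (fun t => fderiv ℝ f (x, t) (1, 0))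
        (fderiv ℝ (fderiv ℝ f) (x, y) (0, 1) (1, 0)) y := by
      have h := aux_hY (fun q => fderiv ℝ f q (1, 0)) x y ((hd' _).clm_apply (by fun_prop))
      convert h using 1
      rw [fderiv_clm_apply (hd' _) (by fun_prop)]
      simp
    have a2 : HasDerivAt (fun t => fderiv ℝ f (t, y) (0, 1))
        (fderiv ℝ (fderiv ℝ f) (x, y) (1, 0) (0, 1)) x := by
      have h := aux_hX (fun q => fderiv ℝ f q (0, 1)) x y ((hd' _).clm_apply (by fun_prop))
      convert h using 1
      rw [fderiv_clm_apply (hd' _) (by fun_prop)]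
      simp
    have b1 : pdY (n0Y f) x y = -(fderiv ℝ (fderiv ℝ f) (x, y) (0, 1) (1, 0)) := by
      simp only [pdY, n0Y, hfX]
      exact a1.neg.deriv
    have g := ((((hid x).pow 2).const_mul
      ((Real.pi : ℂ) * (c : ℂ) * Complex.I / (2 * (μ : ℂ)))).sub
      ((hid x).const_mul ((ν : ℂ) * Complex.I))).add_const ((μ : ℂ) * Complex.I * (y : ℂ))
    have b2 := (a2.neg.add (g.mul (hXd x y))).deriv
    have b3 : pdX (n1X c μ ν f) x y = -(fderiv ℝ (fderiv ℝ f) (x, y) (1, 0) (0, 1)) +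
        ((Real.pi * c * Complex.I / (2 * μ) * (2 * x) - ν * Complex.I) * f (x, y) +
          (Real.pi * c * Complex.I / (2 * μ) * (x : ℂ) ^ 2 - ν * Complex.I * x
            + μ * Complex.I * y) * fderiv ℝ f (x, y) (1, 0)) := by
      simp only [pdX, n1X, hfY]
      refine Eq.trans b2 ?_
      simp
    have b4 : n0Y (n1X c μ ν f) (x, y) = -pdX (n1X c μ ν f) x y := rfl
    rw [b4, b3, hsym]
    simp only [n1X, b1]
    simp only [n0Y, n0Z, hfX]
    field_simp
    ring
  · rintro ⟨x, y⟩
    have b1 : pdY (n0Z μ f) x y =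
        Real.pi * Complex.I * x / μ * fderiv ℝ f (x, y) (0, 1) := by
      simp only [pdY, n0Z]
      exact ((hYd x y).const_mul _).deriv
    simp only [n1X, b1]
    simp only [n0Z, n1X, hfY]
    ring
  · rintro ⟨x, y⟩
    have b1 : pdX (n0Z μ f) x y = Real.pi * Complex.I * 1 / μ * f (x, y) +
        Real.pi * Complex.I * x / μ * fderiv ℝ f (x, y) (1, 0) := by
      simp only [pdX, n0Z]
      exact ((((hid x).const_mul ((Real.pi : ℂ) * Complex.I)).div_const (μ : ℂ)).mul (hXd x y)).deriv
    simp only [n0Y, b1]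
    simp only [n0Z, n0Y, hfX]
    ring

end
end

section
/- Criticality criterion for constant-curvature connections (Theorem 'thm:critical-ioi', operator form): let V be the complex vector space of module functions and let ∇_X, ∇_Y, ∇_Z : V → V be linear maps with constant curvature, meaning there exist real numbers θ₁, θ₂, θ₃ with ∇_X∇_Y − ∇_Y∇_X − c·∇_Z = θ₁·i·id_V, ∇_X∇_Z − ∇_Z∇_X = θ₂·i·id_V, and ∇_Y∇_Z − ∇_Z∇_Y = θ₃·i·id_V. Set Θ(X,Y) = θ₁·i·id_V, Θ(X,Z) = θ₂·i·id_V, Θ(Y,Z) = θ₃·i·id_V and Θ(W',W) = −Θ(W,W'). Then the three Yang–Mills critical-point equations (1) [∇_Y, Θ(X,Y)] + [∇_Z, Θ(X,Z)] = 0, (2) [∇_X, Θ(Y,X)] + [∇_Z, Θ(Y,Z)] = 0, (3) [∇_X, Θ(Z,X)] + [∇_Y, Θ(Z,Y)] − c·Θ(X,Y) = 0 all hold if and only if θ₁ = 0. -/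
noncomputable section

/-- The complex vector space of module functions, as a submodule of `ℝ × ℝ → ℂ`. -/
def moduleFnSub : Submodule ℂ (ℝ × ℝ → ℂ) where
  carrier := {f | IsModuleFn f}
  add_mem' := by
    rintro f g ⟨hf1, hf2, K1, hK1, hK1'⟩ ⟨hg1, hg2, K2, hK2, hK2'⟩
    refine ⟨hf1.add hg1, fun x y => ?_, K1 ∪ K2, hK1.union hK2, fun x y hx => ?_⟩
    · simp only [Pi.add_apply, hf2 x y, hg2 x y]
    · simp only [Set.mem_union, not_or] at hx
      simp only [Pi.add_apply, hK1' x y hx.1, hK2' x y hx.2, add_zero]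
  zero_mem' := ⟨contDiff_const, fun _ _ => rfl, ∅, isCompact_empty, fun _ _ _ => rfl⟩
  smul_mem' := by
    rintro a f ⟨hf1, hf2, K, hK, hK'⟩
    refine ⟨hf1.const_smul a, fun x y => ?_, K, hK, fun x y hx => ?_⟩
    · simp only [Pi.smul_apply, hf2 x y]
    · simp only [Pi.smul_apply, hK' x y hx, smul_zero]

/-- The curvature value `θ·i·id_V` as a linear operator on the space of module functions. -/
noncomputable def thetaOp (θ : ℝ) : moduleFnSub →ₗ[ℂ] moduleFnSub :=
  ((θ : ℂ) * Complex.I) • LinearMap.id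

/-- Commutator of linear operators. -/
def commOp {V : Type*} [AddCommGroup V] [Module ℂ V] (A B : V →ₗ[ℂ] V) : V →ₗ[ℂ] V :=
  A ∘ₗ B - B ∘ₗ A

theorem exists_moduleFn_ne_zero : ∃ v : moduleFnSub, v ≠ 0 := by
  let g : ContDiffBump (0 : ℝ) := ⟨1, 2, by norm_num, by norm_num⟩
  have hm : IsModuleFn (fun q : ℝ × ℝ => ((g q.1 : ℝ) : ℂ)) := by
    refine ⟨?_, fun _ _ => rfl, tsupport g, g.hasCompactSupport, fun x y hx => ?_⟩
    · exact Complex.ofRealCLM.contDiff.comp (g.contDiff.comp contDiff_fst)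
    · simp [image_eq_zero_of_notMem_tsupport hx]
  refine ⟨⟨_, hm⟩, fun h => ?_⟩
  have h1 := congrFun (congrArg Subtype.val h) ((0 : ℝ), (0 : ℝ))
  have h2 : g (0 : ℝ) = 1 := g.one_of_mem_closedBall (by simp [g])
  simp [h2] at h1

theorem critical_gen {V : Type*} [AddCommGroup V] [Module ℂ V] (hV : ∃ v : V, v ≠ 0)
    (c : ℂ) (hc : c ≠ 0) (A B C : V →ₗ[ℂ] V) (a₁ a₂ a₃ : ℂ) :
    (commOp B (a₁ • LinearMap.id) + commOp C (a₂ • LinearMap.id) = 0 ∧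
     commOp A (-(a₁ • LinearMap.id)) + commOp C (a₃ • LinearMap.id) = 0 ∧
     commOp A (-(a₂ • LinearMap.id)) + commOp B (-(a₃ • LinearMap.id))
       - c • (a₁ • (LinearMap.id : V →ₗ[ℂ] V)) = 0) ↔ a₁ = 0 := by
  have h1 : ∀ (T : V →ₗ[ℂ] V) (a : ℂ), commOp T (a • LinearMap.id) = 0 := by
    intro T a
    ext v
    simp [commOp]
  have h2 : ∀ (T : V →ₗ[ℂ] V) (a : ℂ), commOp T (-(a • LinearMap.id)) = 0 := by
    intro T a
    ext v
    simp [commOp]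
  simp only [h1, h2, add_zero, zero_sub, true_and, neg_eq_zero]
  constructor
  · intro h
    obtain ⟨v, hv⟩ := hV
    have h3 := LinearMap.congr_fun h v
    simpa [hv, hc] using h3
  · rintro rfl
    simp

/-- Theorem `thm:critical-ioi`, operator form: linear operators
`∇_X, ∇_Y, ∇_Z` on the space `V` of module functions with constant curvature
`Θ(X,Y) = θ₁·i·id`, `Θ(X,Z) = θ₂·i·id`, `Θ(Y,Z) = θ₃·i·id` satisfy the three Yang–Mills
critical-point equations if and only if `θ₁ = 0`. -/
theorem statement9 (c : ℕ) (hc : 0 < c) (μ ν : ℝ) (hμ : μ ≠ 0)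
    (nX nY nZ : moduleFnSub →ₗ[ℂ] moduleFnSub) (θ₁ θ₂ θ₃ : ℝ)
    (hXY : nX ∘ₗ nY - nY ∘ₗ nX - (c : ℂ) • nZ = thetaOp θ₁)
    (hXZ : nX ∘ₗ nZ - nZ ∘ₗ nX = thetaOp θ₂)
    (hYZ : nY ∘ₗ nZ - nZ ∘ₗ nY = thetaOp θ₃) :
    (commOp nY (thetaOp θ₁) + commOp nZ (thetaOp θ₂) = 0 ∧
     commOp nX (-thetaOp θ₁) + commOp nZ (thetaOp θ₃) = 0 ∧
     commOp nX (-thetaOp θ₂) + commOp nY (-thetaOp θ₃) - (c : ℂ) • thetaOp θ₁ = 0)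
    ↔ θ₁ = 0 := by
  have hc' : (c : ℂ) ≠ 0 := Nat.cast_ne_zero.mpr hc.ne'
  have key := critical_gen exists_moduleFn_ne_zero (c : ℂ) hc' nX nY nZ
    ((θ₁ : ℂ) * Complex.I) ((θ₂ : ℂ) * Complex.I) ((θ₃ : ℂ) * Complex.I)
  have h0 : ((θ₁ : ℂ) * Complex.I = 0) ↔ θ₁ = 0 := by simp
  exact Iff.trans key h0

end
end

section
/- Yang–Mills value of the Z-perturbed connection (Theorem 'thm:min-but-nc'(b), value formula): let c be a positive integer, μ > 0, and α a nonzero real number. Then −∫₀^{2μ} ∫₀^1 [ (i·c·cos(απx/μ))² + (πi/μ − i·(απ/μ)·sin(απx/μ))² ] dy dx = c²μ + (c²μ/(4απ))·sin(4απ) + 2π²/μ + (2π/μ)·(cos(2απ) − 1) + α²π²/μ − (απ/(4μ))·sin(4απ). (This is the value YM(∇) of the Yang–Mills functional at the compatible connection ∇ = ∇⁰ + H with H_X = H_Y = 0 and H_Z = i·cos(απx/μ)·δ₀, computed from its curvature.) -/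
noncomputable section

/-- Theorem `thm:min-but-nc`(b), value formula: for a positive integer `c`,
`μ > 0`, and `α ≠ 0`,
`−∫₀^{2μ}∫₀^1 [(i·c·cos(απx/μ))² + (πi/μ − i·(απ/μ)·sin(απx/μ))²] dy dx
  = c²μ + (c²μ/(4απ))·sin(4απ) + 2π²/μ + (2π/μ)·(cos(2απ) − 1) + α²π²/μ − (απ/(4μ))·sin(4απ)`,
the Yang–Mills value of the `Z`-perturbed connection `∇ = ∇⁰ + H`, `H_Z = i·cos(απx/μ)·δ₀`. -/
theorem statement11 (c : ℕ) (hc : 0 < c) (μ : ℝ) (hμ : 0 < μ) (α : ℝ) (hα : α ≠ 0) :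
    -(∫ x in (0 : ℝ)..(2 * μ), ∫ _y in (0 : ℝ)..(1 : ℝ),
        ((Complex.I * (c : ℂ) * (Real.cos (α * Real.pi * x / μ) : ℂ)) ^ 2 +
          ((Real.pi : ℂ) * Complex.I / (μ : ℂ) -
            Complex.I * ((α * Real.pi / μ : ℝ) : ℂ) *
              (Real.sin (α * Real.pi * x / μ) : ℂ)) ^ 2)) =
      (((c : ℝ) ^ 2 * μ
        + ((c : ℝ) ^ 2 * μ / (4 * α * Real.pi)) * Real.sin (4 * α * Real.pi)
        + 2 * Real.pi ^ 2 / μ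
        + (2 * Real.pi / μ) * (Real.cos (2 * α * Real.pi) - 1)
        + α ^ 2 * Real.pi ^ 2 / μ
        - (α * Real.pi / (4 * μ)) * Real.sin (4 * α * Real.pi) : ℝ) : ℂ) := by
  have hp := Real.pi_pos
  have hμ0 : μ ≠ 0 := hμ.ne'
  have hp0 : Real.pi ≠ 0 := hp.ne'
  have key : ∫ x in (0 : ℝ)..(2 * μ), ((c : ℝ) ^ 2 * Real.cos (α * Real.pi * x / μ) ^ 2 +
      (Real.pi / μ - α * Real.pi / μ * Real.sin (α * Real.pi * x / μ)) ^ 2) =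
      ((c : ℝ) ^ 2 * μ
        + ((c : ℝ) ^ 2 * μ / (4 * α * Real.pi)) * Real.sin (4 * α * Real.pi)
        + 2 * Real.pi ^ 2 / μ
        + (2 * Real.pi / μ) * (Real.cos (2 * α * Real.pi) - 1)
        + α ^ 2 * Real.pi ^ 2 / μ
        - (α * Real.pi / (4 * μ)) * Real.sin (4 * α * Real.pi)) := by
    have hd : ∀ x ∈ Set.uIcc (0 : ℝ) (2 * μ), HasDerivAt (fun x : ℝ =>
        (c : ℝ) ^ 2 * (x / 2 + μ / (2 * α * Real.pi) *
          (Real.sin (α * Real.pi * x / μ) * Real.cos (α * Real.pi * x / μ)))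
        + Real.pi ^ 2 / μ ^ 2 * x + 2 * Real.pi / μ * Real.cos (α * Real.pi * x / μ)
        + (α * Real.pi / μ) ^ 2 * (x / 2) - α * Real.pi / μ / 2 *
          (Real.sin (α * Real.pi * x / μ) * Real.cos (α * Real.pi * x / μ)))
        ((c : ℝ) ^ 2 * Real.cos (α * Real.pi * x / μ) ^ 2 +
      (Real.pi / μ - α * Real.pi / μ * Real.sin (α * Real.pi * x / μ)) ^ 2) x := by
      intro x _
      have hu : HasDerivAt (fun x : ℝ => α * Real.pi * x / μ) (α * Real.pi * 1 / μ) x :=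
        ((hasDerivAt_id x).const_mul (α * Real.pi)).div_const μ
      have hs := hu.sin
      have hcs := hu.cos
      have hx := (hasDerivAt_id x).div_const 2
      have h := (((((hx.add ((hs.mul hcs).const_mul (μ / (2 * α * Real.pi)))).const_mul
        ((c : ℝ) ^ 2)).add ((hasDerivAt_id x).const_mul (Real.pi ^ 2 / μ ^ 2))).add
        (hcs.const_mul (2 * Real.pi / μ))).add (hx.const_mul ((α * Real.pi / μ) ^ 2))).sub
        ((hs.mul hcs).const_mul (α * Real.pi / μ / 2))
      refine h.congr_deriv ?_
      have e := Real.sin_sq_add_cos_sq (α * Real.pi * x / μ)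
      generalize Real.sin (α * Real.pi * x / μ) = S at *
      generalize Real.cos (α * Real.pi * x / μ) = C at *
      have e1 : S ^ 2 = 1 - C ^ 2 := by linarith
      field_simp
      ring_nf
      simp only [e1]
      ring
    rw [intervalIntegral.integral_eq_sub_of_hasDerivAt hd
      (Continuous.intervalIntegrable (by fun_prop) _ _)]
    have e1 : α * Real.pi * (2 * μ) / μ = 2 * α * Real.pi := by field_simp
    have e2 : 4 * α * Real.pi = 2 * (2 * α * Real.pi) := by ring
    simp only [e1, mul_zero, zero_div, Real.sin_zero, Real.cos_zero]
    rw [show Real.sin (4 * α * Real.pi) = _ from by rw [e2, Real.sin_two_mul]]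
    field_simp
    ring
  rw [← key, ← intervalIntegral.integral_ofReal, ← intervalIntegral.integral_neg]
  refine intervalIntegral.integral_congr fun x _ => ?_
  simp only [intervalIntegral.integral_const, sub_zero, one_smul]
  push_cast
  linear_combination (-((c : ℂ) ^ 2 * Complex.cos (α * Real.pi * x / μ) ^ 2 +
      (Real.pi / μ - α * Real.pi / μ * Complex.sin (α * Real.pi * x / μ)) ^ 2)) * Complex.I_sq

end
end

section
/- The connection ∇¹ is not a critical point of the Yang–Mills functional (part of Proposition 'prop:nabla-1-not-cp'): assume ν ≠ 0, and let Θ(X,Y) = ∇¹_X∇¹_Y − ∇¹_Y∇¹_X − c·∇¹_Z, Θ(X,Z) = ∇¹_X∇¹_Z − ∇¹_Z∇¹_X, Θ(Y,Z) = ∇¹_Y∇¹_Z − ∇¹_Z∇¹_Y as operators on module functions (equal to −νi·id, 0, −(πi/μ)·id respectively). Then the third Yang–Mills critical-point equation fails for ∇¹: for every module function f, [∇¹_X, −Θ(X,Z)] f + [∇¹_Y, −Θ(Y,Z)] f − c·Θ(X,Y) f = c·ν·i·f, which is nonzero whenever f ≠ 0; hence ∇¹ is not a critical point of the Yang–Mills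 functional. -/
noncomputable section

/-- The curvature operator `Θ(X,Y) = ∇¹_X∇¹_Y − ∇¹_Y∇¹_X − c·∇¹_Z` of `∇¹`
(here `∇¹_Y = ∇⁰_Y`, `∇¹_Z = ∇⁰_Z`). -/
def th1XY (c : ℕ) (μ ν : ℝ) (f : ℝ × ℝ → ℂ) : ℝ × ℝ → ℂ := fun q =>
  n1X c μ ν (n0Y f) q - n0Y (n1X c μ ν f) q - (c : ℂ) * n0Z μ f q

/-- The curvature operator `Θ(X,Z) = ∇¹_X∇¹_Z − ∇¹_Z∇¹_X` of `∇¹`. -/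
def th1XZ (c : ℕ) (μ ν : ℝ) (f : ℝ × ℝ → ℂ) : ℝ × ℝ → ℂ := fun q =>
  n1X c μ ν (n0Z μ f) q - n0Z μ (n1X c μ ν f) q

/-- The curvature operator `Θ(Y,Z) = ∇¹_Y∇¹_Z − ∇¹_Z∇¹_Y` of `∇¹`. -/
def th1YZ (μ : ℝ) (f : ℝ × ℝ → ℂ) : ℝ × ℝ → ℂ := fun q =>
  n0Y (n0Z μ f) q - n0Z μ (n0Y f) q

theorem pdX_eq (g : ℝ × ℝ → ℂ) (hg : Differentiable ℝ g) (x y : ℝ) :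
    HasDerivAt (fun t => g (t, y)) (fderiv ℝ g (x, y) (1, 0)) x := by
  have h1 : HasDerivAt (fun t : ℝ => (t, y)) ((1 : ℝ), (0 : ℝ)) x :=
    (hasDerivAt_id x).prodMk (hasDerivAt_const x y)
  exact (hg (x, y)).hasFDerivAt.comp_hasDerivAt x h1

theorem pdY_eq (g : ℝ × ℝ → ℂ) (hg : Differentiable ℝ g) (x y : ℝ) :
    HasDerivAt (fun t => g (x, t)) (fderiv ℝ g (x, y) (0, 1)) y := by
  have h1 : HasDerivAt (fun t : ℝ => (x, t)) ((0 : ℝ), (1 : ℝ)) y :=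
    (hasDerivAt_const y x).prodMk (hasDerivAt_id y)
  exact (hg (x, y)).hasFDerivAt.comp_hasDerivAt y h1

theorem th1XZ_zero (c : ℕ) (μ ν : ℝ) (g : ℝ × ℝ → ℂ) : th1XZ c μ ν g = 0 := by
  funext q
  simp only [th1XZ, n1X, n0Z, pdY, deriv_const_mul_field, Pi.zero_apply]
  ring

theorem th1YZ_eq (μ : ℝ) (g : ℝ × ℝ → ℂ) (hg : Differentiable ℝ g) (q : ℝ × ℝ) :
    th1YZ μ g q = -((Real.pi : ℂ) * Complex.I / (μ : ℂ)) * g q := by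
  have h := pdX_eq g hg q.1 q.2
  have h0 : HasDerivAt (fun t : ℝ => (Real.pi : ℂ) * Complex.I * (t : ℂ) / (μ : ℂ))
      ((Real.pi : ℂ) * Complex.I * 1 / (μ : ℂ)) q.1 :=
    ((Complex.ofRealCLM.hasDerivAt (x := q.1)).const_mul _).div_const _
  have h2 := h0.mul h
  have e : deriv (fun t : ℝ => (Real.pi : ℂ) * Complex.I * (t : ℂ) / (μ : ℂ) * g (t, q.2)) q.1
    = _ := h2.deriv
  simp only [th1YZ, n0Y, n0Z, pdX]
  rw [e, h.deriv]
  ring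

theorem th1XY_eq (c : ℕ) (μ ν : ℝ) (g : ℝ × ℝ → ℂ) (hg : ContDiff ℝ (⊤ : ℕ∞) g) (q : ℝ × ℝ) :
    th1XY c μ ν g q = -((ν : ℂ) * Complex.I) * g q := by
  have hd : Differentiable ℝ g := hg.differentiable (by simp)
  have hf : ContDiff ℝ (⊤ : ℕ∞) (fderiv ℝ g) := hg.fderiv_right (by simp)
  have hfd : Differentiable ℝ (fderiv ℝ g) := hf.differentiable (by simp)
  obtain ⟨x, y⟩ := q
  have hv : ∀ v w : ℝ × ℝ, fderiv ℝ (fun p => fderiv ℝ g p v) (x, y) w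
      = fderiv ℝ (fderiv ℝ g) (x, y) w v := by
    intro v w
    rw [fderiv_clm_apply (hfd _) (by fun_prop)]
    simp
  have hs : fderiv ℝ (fderiv ℝ g) (x, y) (1, 0) (0, 1)
      = fderiv ℝ (fderiv ℝ g) (x, y) (0, 1) (1, 0) :=
    second_derivative_symmetric (fun p => (hd p).hasFDerivAt) (hfd (x, y)).hasFDerivAt _ _
  have hX : ∀ a b, pdX g a b = fderiv ℝ g (a, b) (1, 0) := fun a b => (pdX_eq g hd a b).deriv
  have hY : ∀ a b, pdY g a b = fderiv ℝ g (a, b) (0, 1) := fun a b => (pdY_eq g hd a b).deriv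
  have d1 := pdY_eq (fun p => fderiv ℝ g p (1, 0)) (by fun_prop) x y
  have d2 := pdX_eq (fun p => fderiv ℝ g p (0, 1)) (by fun_prop) x y
  rw [hv] at d1 d2
  have hx : HasDerivAt (fun t : ℝ => (t : ℂ)) 1 x := Complex.ofRealCLM.hasDerivAt (x := x)
  have hA := ((((hx.pow 2).const_mul ((Real.pi : ℂ) * (c : ℂ) * Complex.I / (2 * (μ : ℂ)))).sub
    (hx.const_mul ((ν : ℂ) * Complex.I))).add_const ((μ : ℂ) * Complex.I * (y : ℂ))).mul
      (pdX_eq g hd x y)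
  have e2 := (d2.neg.add hA).deriv
  have e1 := d1.neg.deriv
  have f1 : (fun t => n0Y g (x, t)) = -fun t => fderiv ℝ g (x, t) (1, 0) := by
    funext t
    simp only [n0Y, hX, Pi.neg_apply]
  rw [← f1] at e1
  have e3 := Eq.trans (congrArg (fun F => deriv F x)
    (show (fun t => n1X c μ ν g (t, y)) = _ from by
      funext t
      simp only [n1X, hY]
      rfl)) e2
  beta_reduce at e3
  simp only [th1XY]
  rw [n1X, n0Y, n0Y, n0Z]
  simp only [pdX, pdY]
  rw [e1, e3, (pdX_eq g hd x y).deriv]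
  rw [hs]
  simp
  ring

/-- part of Proposition `prop:nabla-1-not-cp`: for `ν ≠ 0`, the third
Yang–Mills critical-point equation fails for `∇¹`: for every module function `f`,
`[∇¹_X, −Θ(X,Z)]f + [∇¹_Y, −Θ(Y,Z)]f − c·Θ(X,Y)f = c·ν·i·f`, which is nonzero whenever
`f ≠ 0`; hence `∇¹` is not a critical point of the Yang–Mills functional. -/
theorem statement13 (c : ℕ) (hc : 0 < c) (μ ν : ℝ) (hμ : μ ≠ 0) (hν : ν ≠ 0)
    (f : ℝ × ℝ → ℂ) (hf : IsModuleFn f) :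
    (∀ q : ℝ × ℝ,
      (n1X c μ ν (-th1XZ c μ ν f) q - (-th1XZ c μ ν (n1X c μ ν f)) q) +
        (n0Y (-th1YZ μ f) q - (-th1YZ μ (n0Y f)) q) -
          (c : ℂ) * th1XY c μ ν f q
        = (c : ℂ) * (ν : ℂ) * Complex.I * f q) ∧
    (f ≠ 0 → (fun q : ℝ × ℝ => (c : ℂ) * (ν : ℂ) * Complex.I * f q) ≠ (0 : ℝ × ℝ → ℂ)) := by
  have hd : Differentiable ℝ f := hf.1.differentiable (by simp)
  have hff : ContDiff ℝ (⊤ : ℕ∞) (fderiv ℝ f) := hf.1.fderiv_right (by simp)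
  have hfd : Differentiable ℝ (fderiv ℝ f) := hff.differentiable (by simp)
  have hYd : Differentiable ℝ (n0Y f) := by
    have : n0Y f = fun p => -(fderiv ℝ f p (1, 0)) := by
      funext p
      simp only [n0Y, pdX]
      rw [(pdX_eq f hd p.1 p.2).deriv]
    rw [this]
    fun_prop
  refine ⟨fun q => ?_, fun hne h0 => hne ?_⟩
  · have h3 : -th1YZ μ f = fun q => ((Real.pi : ℂ) * Complex.I / (μ : ℂ)) * f q := by
      funext p
      rw [Pi.neg_apply, th1YZ_eq μ f hd]
      ring
    rw [th1XZ_zero, th1XZ_zero, th1XY_eq c μ ν f hf.1, h3,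
      show (-th1YZ μ (n0Y f)) q = -(th1YZ μ (n0Y f) q) from rfl, th1YZ_eq μ _ hYd]
    simp only [n0Y, n1X, pdX, pdY, deriv_const_mul_field, Pi.neg_apply, Pi.zero_apply, deriv_const,
      neg_zero]
    ring
  · funext q
    have h := congrFun h0 q
    have hc' : (c : ℂ) ≠ 0 := by exact_mod_cast hc.ne'
    have hν' : (ν : ℂ) ≠ 0 := by exact_mod_cast hν
    simpa [hc', hν'] using h

end
end

section
/- The module Ξ is isomorphic to QD as a bimodule (Lemma 'lem:1'): in the imprimitivity setting below, set Q = ⟨R,R⟩_R ∈ D and define F : Ξ → D by F(ξ) = ⟨R, ξ⟩_R. Then: (i) Q* = Q and Q·F(ξ) = F(ξ) for every ξ ∈ Ξ (so F maps into QD = {d ∈ D : Q·d = d}); (ii) R·F(ξ) = ξ for every ξ ∈ Ξ; (iii) F(R·d) = d for every d ∈ D with Q·d = d; (iv) F(ξ·Φ) = F(ξ)·Φ for all ξ ∈ Ξ, Φ ∈ D; (v) F(ξ)*·F(η) = ⟨ξ, η⟩_R for all ξ, η ∈ Ξ; (vi) setting φ(a) = ⟨R, a·R⟩_R for a ∈ E,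 one has F(a·ξ) = φ(a)·F(ξ) for all a ∈ E, ξ ∈ Ξ. Consequently F is a bijection from Ξ onto QD intertwining the module structures. -/
/-- Lemma `lem:1`, `Ξ ≅ QD` as bimodules: in the imprimitivity setting, with
`Q = ⟨R,R⟩_R` and `F(ξ) = ⟨R,ξ⟩_R`, the claims (i)–(vi) hold and `F` is a bijection from `Ξ`
onto `QD = {d : Q·d = d}` intertwining the module structures. -/
theorem statement17
    {D E Ξ : Type*}
    [Ring D] [Algebra ℂ D] [StarRing D] [StarModule ℂ D]
    [Ring E] [Algebra ℂ E] [StarRing E] [StarModule ℂ E]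
    [AddCommGroup Ξ] [Module ℂ Ξ]
    -- the left `E`-action, the right `D`-action, and the two inner products on `Ξ`
    (aL : E → Ξ → Ξ) (aR : Ξ → D → Ξ) (ipR : Ξ → Ξ → D) (ipL : Ξ → Ξ → E)
    -- `Ξ` is a left `E`-module
    (haL_add : ∀ (a : E) (ξ η : Ξ), aL a (ξ + η) = aL a ξ + aL a η)
    (haL_add' : ∀ (a b : E) (ξ : Ξ), aL (a + b) ξ = aL a ξ + aL b ξ)
    (haL_mul : ∀ (a b : E) (ξ : Ξ), aL (a * b) ξ = aL a (aL b ξ))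
    -- `Ξ` is a right `D`-module
    (haR_add : ∀ (ξ η : Ξ) (d : D), aR (ξ + η) d = aR ξ d + aR η d)
    (haR_add' : ∀ (ξ : Ξ) (d₁ d₂ : D), aR ξ (d₁ + d₂) = aR ξ d₁ + aR ξ d₂)
    (haR_mul : ∀ (ξ : Ξ) (d₁ d₂ : D), aR ξ (d₁ * d₂) = aR (aR ξ d₁) d₂)
    -- the actions commute
    (hcomm : ∀ (a : E) (ξ : Ξ) (d : D), aR (aL a ξ) d = aL a (aR ξ d))
    -- `⟨ξ, η·d⟩_R = ⟨ξ,η⟩_R·d` and `(⟨ξ,η⟩_R)* = ⟨η,ξ⟩_R`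
    (hipR_act : ∀ (ξ η : Ξ) (d : D), ipR ξ (aR η d) = ipR ξ η * d)
    (hipR_star : ∀ ξ η : Ξ, star (ipR ξ η) = ipR η ξ)
    -- the imprimitivity relation `⟨ξ,η⟩_L·ζ = ξ·⟨η,ζ⟩_R`
    (himp : ∀ ξ η ζ : Ξ, aL (ipL ξ η) ζ = aR ξ (ipR η ζ))
    -- `R ∈ Ξ` with `⟨R,R⟩_L·ξ = ξ`
    (R : Ξ) (hR : ∀ ξ : Ξ, aL (ipL R R) ξ = ξ)
    :
    -- (i) `Q* = Q` and `Q·F(ξ) = F(ξ)`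
    (star (ipR R R) = ipR R R ∧ ∀ ξ : Ξ, ipR R R * ipR R ξ = ipR R ξ) ∧
    -- (ii) `R·F(ξ) = ξ`
    (∀ ξ : Ξ, aR R (ipR R ξ) = ξ) ∧
    -- (iii) `F(R·d) = d` for `d ∈ QD`
    (∀ d : D, ipR R R * d = d → ipR R (aR R d) = d) ∧
    -- (iv) `F(ξ·Φ) = F(ξ)·Φ`
    (∀ (ξ : Ξ) (Φ : D), ipR R (aR ξ Φ) = ipR R ξ * Φ) ∧
    -- (v) `F(ξ)*·F(η) = ⟨ξ,η⟩_R`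
    (∀ ξ η : Ξ, star (ipR R ξ) * ipR R η = ipR ξ η) ∧
    -- (vi) `F(a·ξ) = φ(a)·F(ξ)` with `φ(a) = ⟨R, a·R⟩_R`
    (∀ (a : E) (ξ : Ξ), ipR R (aL a ξ) = ipR R (aL a R) * ipR R ξ) ∧
    -- consequently `F` is a bijection from `Ξ` onto `QD`
    Set.BijOn (fun ξ : Ξ => ipR R ξ) Set.univ {d : D | ipR R R * d = d} := by
  have h2 : ∀ ξ : Ξ, aR R (ipR R ξ) = ξ := fun ξ => by rw [← himp, hR]
  have h1 : ∀ ξ : Ξ, ipR R R * ipR R ξ = ipR R ξ := fun ξ => by rw [← hipR_act, h2]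
  have h3 : ∀ d : D, ipR R R * d = d → ipR R (aR R d) = d := fun d hd => by
    rw [hipR_act, hd]
  refine ⟨⟨hipR_star R R, h1⟩, h2, h3, hipR_act R, ?_, ?_, ?_, ?_, ?_⟩
  · intro ξ η
    rw [hipR_star, ← hipR_act, h2]
  · intro a ξ
    rw [← hipR_act, hcomm, h2]
  · intro ξ _
    exact h1 ξ
  · intro ξ _ η _ h
    have h' : ipR R ξ = ipR R η := h
    rw [← h2 ξ, h', h2]
  · intro d hd
    exact ⟨aR R d, Set.mem_univ _, h3 d hd⟩
end

section
/- Transport of connections and curvature to QD (Proposition 'prop:conn_ex1', abstract form): in the imprimitivity setting below, suppose additionally that δ_X, δ_Y, δ_Z : D → D are additive derivations (δ(d₁d₂) = δ(d₁)d₂ + d₁δ(d₂)) with δ_X∘δ_Y − δ_Y∘δ_X = c·δ_Z, and that ∇_X, ∇_Y, ∇_Z : Ξ → Ξ are additive maps satisfying the Leibniz rule ∇_W(ξ·d) = ∇_W(ξ)·d + ξ·δ_W(d) for each W and all ξ ∈ Ξ, d ∈ D. Set Q = ⟨R,R⟩_R and, for d ∈ D with Q·d = d, define ∇'_W(d) =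 ⟨R, ∇_W(R·d)⟩_R. Then: (a) ∇'_W(d·Φ) = ∇'_W(d)·Φ + d·δ_W(Φ) for all such d and all Φ ∈ D; and (b) with Θ(X,Y) := ∇_X∇_Y − ∇_Y∇_X − c·∇_Z on Ξ and Θ'(X,Y) := ∇'_X∇'_Y − ∇'_Y∇'_X − c·∇'_Z on QD, one has Θ'(X,Y)(d) = ⟨R, Θ(X,Y)(R)⟩_R·d for every d with Q·d = d (the transported curvature acts by left multiplication by ⟨R, Θ(X,Y)(R)⟩_R). -/
/-- Proposition `prop:conn_ex1`, abstract form: in the imprimitivity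
setting, given derivations `δ_X, δ_Y, δ_Z` of `D` with `δ_X∘δ_Y − δ_Y∘δ_X = c·δ_Z` and
additive maps `∇_X, ∇_Y, ∇_Z : Ξ → Ξ` satisfying the Leibniz rule, the transported maps
`∇'_W(d) = ⟨R, ∇_W(R·d)⟩_R` on `QD` (`Q = ⟨R,R⟩_R`) satisfy (a) the Leibniz rule, and (b) the
transported curvature acts by left multiplication by `⟨R, Θ(X,Y)(R)⟩_R`, where
`Θ(X,Y) = ∇_X∇_Y − ∇_Y∇_X − c·∇_Z`. -/
theorem statement18 (c : ℕ) (hc : 0 < c)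
    {D E Ξ : Type*}
    [Ring D] [Algebra ℂ D] [StarRing D] [StarModule ℂ D]
    [Ring E] [Algebra ℂ E] [StarRing E] [StarModule ℂ E]
    [AddCommGroup Ξ] [Module ℂ Ξ]
    -- the left `E`-action, the right `D`-action, and the two inner products on `Ξ`
    (aL : E → Ξ → Ξ) (aR : Ξ → D → Ξ) (ipR : Ξ → Ξ → D) (ipL : Ξ → Ξ → E)
    -- `Ξ` is a left `E`-module
    (haL_add : ∀ (a : E) (ξ η : Ξ), aL a (ξ + η) = aL a ξ + aL a η)
    (haL_add' : ∀ (a b : E) (ξ : Ξ), aL (a + b) ξ = aL a ξ + aL b ξ)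
    (haL_mul : ∀ (a b : E) (ξ : Ξ), aL (a * b) ξ = aL a (aL b ξ))
    -- `Ξ` is a right `D`-module
    (haR_add : ∀ (ξ η : Ξ) (d : D), aR (ξ + η) d = aR ξ d + aR η d)
    (haR_add' : ∀ (ξ : Ξ) (d₁ d₂ : D), aR ξ (d₁ + d₂) = aR ξ d₁ + aR ξ d₂)
    (haR_mul : ∀ (ξ : Ξ) (d₁ d₂ : D), aR ξ (d₁ * d₂) = aR (aR ξ d₁) d₂)
    -- the actions commute
    (hcomm : ∀ (a : E) (ξ : Ξ) (d : D), aR (aL a ξ) d = aL a (aR ξ d))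
    -- `⟨ξ, η·d⟩_R = ⟨ξ,η⟩_R·d` and `(⟨ξ,η⟩_R)* = ⟨η,ξ⟩_R`
    (hipR_act : ∀ (ξ η : Ξ) (d : D), ipR ξ (aR η d) = ipR ξ η * d)
    (hipR_star : ∀ ξ η : Ξ, star (ipR ξ η) = ipR η ξ)
    -- the imprimitivity relation `⟨ξ,η⟩_L·ζ = ξ·⟨η,ζ⟩_R`
    (himp : ∀ ξ η ζ : Ξ, aL (ipL ξ η) ζ = aR ξ (ipR η ζ))
    -- `R ∈ Ξ` with `⟨R,R⟩_L·ξ = ξ`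
    (R : Ξ) (hR : ∀ ξ : Ξ, aL (ipL R R) ξ = ξ)
    -- additive derivations `δ_X, δ_Y, δ_Z` on `D` with `δ_X∘δ_Y − δ_Y∘δ_X = c·δ_Z`
    (δX δY δZ : D → D)
    (hδXadd : ∀ d₁ d₂ : D, δX (d₁ + d₂) = δX d₁ + δX d₂)
    (hδYadd : ∀ d₁ d₂ : D, δY (d₁ + d₂) = δY d₁ + δY d₂)
    (hδZadd : ∀ d₁ d₂ : D, δZ (d₁ + d₂) = δZ d₁ + δZ d₂)
    (hδXmul : ∀ d₁ d₂ : D, δX (d₁ * d₂) = δX d₁ * d₂ + d₁ * δX d₂)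
    (hδYmul : ∀ d₁ d₂ : D, δY (d₁ * d₂) = δY d₁ * d₂ + d₁ * δY d₂)
    (hδZmul : ∀ d₁ d₂ : D, δZ (d₁ * d₂) = δZ d₁ * d₂ + d₁ * δZ d₂)
    (hδbr : ∀ d : D, δX (δY d) - δY (δX d) = c • δZ d)
    -- additive maps `∇_X, ∇_Y, ∇_Z : Ξ → Ξ` satisfying the Leibniz rule
    (nX nY nZ : Ξ → Ξ)
    (hnXadd : ∀ ξ η : Ξ, nX (ξ + η) = nX ξ + nX η)
    (hnYadd : ∀ ξ η : Ξ, nY (ξ + η) = nY ξ + nY η)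
    (hnZadd : ∀ ξ η : Ξ, nZ (ξ + η) = nZ ξ + nZ η)
    (hnX : ∀ (ξ : Ξ) (d : D), nX (aR ξ d) = aR (nX ξ) d + aR ξ (δX d))
    (hnY : ∀ (ξ : Ξ) (d : D), nY (aR ξ d) = aR (nY ξ) d + aR ξ (δY d))
    (hnZ : ∀ (ξ : Ξ) (d : D), nZ (aR ξ d) = aR (nZ ξ) d + aR ξ (δZ d)) :
    -- (a) the transported maps `∇'_W(d) = ⟨R, ∇_W(R·d)⟩_R` satisfy the Leibniz rule on `QD`
    (∀ (d Φ : D), ipR R R * d = d →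
      (ipR R (nX (aR R (d * Φ))) = ipR R (nX (aR R d)) * Φ + d * δX Φ) ∧
      (ipR R (nY (aR R (d * Φ))) = ipR R (nY (aR R d)) * Φ + d * δY Φ) ∧
      (ipR R (nZ (aR R (d * Φ))) = ipR R (nZ (aR R d)) * Φ + d * δZ Φ)) ∧
    -- (b) the transported curvature acts by left multiplication by `⟨R, Θ(X,Y)(R)⟩_R`
    (∀ d : D, ipR R R * d = d →
      ipR R (nX (aR R (ipR R (nY (aR R d))))) - ipR R (nY (aR R (ipR R (nX (aR R d)))))
          - c • ipR R (nZ (aR R d))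
        = ipR R (nX (nY R) - nY (nX R) - c • nZ R) * d) := by
  have key : ∀ ξ : Ξ, aR R (ipR R ξ) = ξ := fun ξ => by rw [← himp, hR]
  have fadd : ∀ ξ η : Ξ, ipR R (ξ + η) = ipR R ξ + ipR R η := by
    intro ξ η
    have h : ξ + η = aR R (ipR R ξ + ipR R η) := by rw [haR_add', key, key]
    rw [h, hipR_act, mul_add, ← hipR_act, ← hipR_act, key, key]
  refine ⟨?_, ?_⟩
  · intro d Φ hd
    refine ⟨?_, ?_, ?_⟩
    · rw [haR_mul, hnX, fadd, hipR_act, hipR_act, hipR_act, hd]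
    · rw [haR_mul, hnY, fadd, hipR_act, hipR_act, hipR_act, hd]
    · rw [haR_mul, hnZ, fadd, hipR_act, hipR_act, hipR_act, hd]
  · intro d _
    rw [key, key]
    let f : Ξ →+ D := AddMonoidHom.mk' (ipR R) fadd
    let g : Ξ →+ Ξ := AddMonoidHom.mk' (fun ξ => aR ξ d) (fun ξ η => haR_add ξ η d)
    let r : D →+ Ξ := AddMonoidHom.mk' (aR R) (haR_add' R)
    have hf : ∀ ξ, ipR R ξ = f ξ := fun _ => rfl
    have hg : ∀ ξ, aR ξ d = g ξ := fun _ => rfl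
    have hr : ∀ d, aR R d = r d := fun _ => rfl
    rw [← hipR_act, hf, hf, hf, hf, ← map_nsmul, ← map_sub, ← map_sub]
    congr 1
    have e := congrArg r (hδbr d)
    rw [map_sub, map_nsmul] at e
    rw [hnX, hnY, hnZ, hnXadd, hnYadd, hnX, hnY, hnX, hnY, hg (_ - _), map_sub, map_sub,
      map_nsmul, smul_add, hr (δX (δY d)), hr (δY (δX d)), hr (δZ d), ← e, ← hg, ← hg, ← hg]
    abel
end
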